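/- Fix an integer n ≥ 1, and let C ⊆ A be a ℂ-subalgebra with D(C) ⊆ C and x, y ∈ C. If the ℂ-linear span of the monomials x^i y^j with i + j ≥ n + 2 (the ideal ⟨x,y⟩^{n+2} of ℂ[x,y]) is contained in D(C ∩ ker D²) = m_1(C), then B_n ⊆ C. (This is the core of the theorem that every affine extension of SL₂ admits a 𝔾_a-equivariant birational morphism onto some P̂_n: choosing n with ⟨x,y⟩^{n+2} ⊆ m_1(C) yields B_n ⊆ C.) -/

import Mathlib

/-!
The kernel of `D` is `ℂ[x, y]` (`exists_polyMap_eq`), and this gives the theorem: a generator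
`w` of `B_n` other than `x`, `y` has `D w` a monomial of degree `n + 2` in `x, y`, so
`D w = D c` for some `c ∈ C`, and `w - c ∈ ker D = ℂ[x, y] ⊆ C`.

To compute the kernel, let `f ∈ ker D`. In characteristic zero `f` is fixed by the
`𝔾_a`-action `u ↦ u + tx`, `v ↦ v + ty` (`flow_eq_C`). Specialising `t` to `-u/x` and to `-v/y`
shows that `x^N f = p(x, y)` and `y^M f = q(x, y)` for some polynomials `p`, `q`
(`exists_pow_mul_eq`). Since `x` and `y` are algebraically independent, `Y^M p = X^N q` in
`ℂ[X, Y]`, so `p = X^N r` and `q = Y^M r`. Thus `f - r(x, y)` is killed by `x^N` and `y^M`,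
which generate the unit ideal because `xv - yu = 1`, and `f = r(x, y)`.
-/

open MvPolynomial

noncomputable section

/-- The ideal `⟨XV − YU − 1⟩` of `ℂ[X, Y, U, V]` (with `X = X 0`, `Y = X 1`, `U = X 2`,
`V = X 3`). -/
def sl2Ideal : Ideal (MvPolynomial (Fin 4) ℂ) :=
  Ideal.span {X 0 * X 3 - X 1 * X 2 - 1}

/-- The coordinate ring `A = ℂ[X,Y,U,V]/⟨XV − YU − 1⟩` of `SL₂` over `ℂ`. -/
abbrev SL2R : Type := MvPolynomial (Fin 4) ℂ ⧸ sl2Ideal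

/-- `x`, the image of `X` in `A`. -/
def sx : SL2R := Ideal.Quotient.mk sl2Ideal (X 0)
/-- `y`, the image of `Y` in `A`. -/
def sy : SL2R := Ideal.Quotient.mk sl2Ideal (X 1)
/-- `u`, the image of `U` in `A`. -/
def su : SL2R := Ideal.Quotient.mk sl2Ideal (X 2)
/-- `v`, the image of `V` in `A`. -/
def sv : SL2R := Ideal.Quotient.mk sl2Ideal (X 3)

/-- The ℂ-subalgebra `B_n ⊆ A` generated by `x`, `y`, the elements `x^i y^{n+1−i} v` for
`i = 0, …, n+1`, and `x^{n+1} u`; it is the coordinate ring of the affine extension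
`P̂_n` of `SL₂`. -/
def Bn (n : ℕ) : Subalgebra ℂ SL2R :=
  Algebra.adjoin ℂ ({sx, sy, sx ^ (n + 1) * su} ∪
    {w : SL2R | ∃ i ≤ n + 1, w = sx ^ i * sy ^ (n + 1 - i) * sv})

/-- The structure map `ℂ[X, Y] → A`, whose range is the subalgebra `ℂ[x, y]`. -/
def polyMap : MvPolynomial (Fin 2) ℂ →ₐ[ℂ] SL2R := aeval ![sx, sy]

lemma polyMap_X0 : polyMap (X 0) = sx := by simp [polyMap]

lemma polyMap_X1 : polyMap (X 1) = sy := by simp [polyMap]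

lemma det_eq : sx * sv - sy * su = 1 := by
  have h : Ideal.Quotient.mk sl2Ideal (X 0 * X 3 - X 1 * X 2 - 1) = 0 :=
    Ideal.Quotient.eq_zero_iff_mem.2 (Ideal.subset_span rfl)
  simp only [map_sub, map_mul, map_one] at h
  exact sub_eq_zero.1 h

/-- The universal property of `A`: a point of `SL₂` with coordinates in `S`. -/
def liftSL2 {S : Type*} [CommRing S] [Algebra ℂ S] (a b c d : S) (h : a * d - b * c = 1) :
    SL2R →ₐ[ℂ] S :=
  Ideal.Quotient.liftₐ sl2Ideal (aeval ![a, b, c, d]) (by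
    intro p hp
    have : sl2Ideal ≤ RingHom.ker (aeval ![a, b, c, d] : MvPolynomial (Fin 4) ℂ →ₐ[ℂ] S) := by
      rw [sl2Ideal, Ideal.span_le, Set.singleton_subset_iff]
      simp [RingHom.mem_ker, h]
    exact this hp)

section lift
variable {S : Type*} [CommRing S] [Algebra ℂ S] (a b c d : S) (h : a * d - b * c = 1)

lemma liftSL2_x : liftSL2 a b c d h sx = a :=
  (Ideal.Quotient.lift_mk _ _ _).trans (by simp)

lemma liftSL2_y : liftSL2 a b c d h sy = b :=
  (Ideal.Quotient.lift_mk _ _ _).trans (by simp)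

lemma liftSL2_u : liftSL2 a b c d h su = c :=
  (Ideal.Quotient.lift_mk _ _ _).trans (by simp)

lemma liftSL2_v : liftSL2 a b c d h sv = d :=
  (Ideal.Quotient.lift_mk _ _ _).trans (by simp)

end lift

lemma SL2R_induction {P : SL2R → Prop} (hc : ∀ r : ℂ, P (algebraMap ℂ SL2R r))
    (hadd : ∀ a b, P a → P b → P (a + b)) (hmul : ∀ a b, P a → P b → P (a * b))
    (h0 : P sx) (h1 : P sy) (h2 : P su) (h3 : P sv) (a : SL2R) : P a := by
  obtain ⟨p, rfl⟩ := Ideal.Quotient.mk_surjective a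
  induction p using MvPolynomial.induction_on with
  | C r => exact hc r
  | add p q hp hq => rw [map_add]; exact hadd _ _ hp hq
  | mul_X p i hp =>
    rw [map_mul]
    refine hmul _ _ hp ?_
    fin_cases i
    exacts [h0, h1, h2, h3]

/-- The coordinates `x`, `y` are algebraically independent, as seen on the point
`(X, Y, 0, 1/X)` of `SL₂` over the field `ℂ(X, Y)`. -/
lemma polyMap_injective : Function.Injective polyMap := by
  let K := FractionRing (MvPolynomial (Fin 2) ℂ)
  have hX : algebraMap (MvPolynomial (Fin 2) ℂ) K (X 0) ≠ 0 := by
    simp [X_ne_zero]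
  let θ : SL2R →ₐ[ℂ] K := liftSL2 (algebraMap (MvPolynomial (Fin 2) ℂ) K (X 0))
    (algebraMap (MvPolynomial (Fin 2) ℂ) K (X 1)) 0
    (algebraMap (MvPolynomial (Fin 2) ℂ) K (X 0))⁻¹ (by
      rw [mul_inv_cancel₀ hX, mul_zero, sub_zero])
  have hθ : θ.comp polyMap = IsScalarTower.toAlgHom ℂ (MvPolynomial (Fin 2) ℂ) K := by
    ext i
    fin_cases i
    · simp [polyMap_X0, θ, liftSL2_x]
    · simp [polyMap_X1, θ, liftSL2_y]
  intro p q hpq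
  apply IsFractionRing.injective (MvPolynomial (Fin 2) ℂ) K
  have h1 := DFunLike.congr_fun hθ p
  have h2 := DFunLike.congr_fun hθ q
  simp only [AlgHom.comp_apply, IsScalarTower.coe_toAlgHom'] at h1 h2
  rw [← h1, ← h2, hpq]

/-- The `𝔾_a`-action `exp(tD)` on `A`, as the map `A → A[t]` with `u ↦ u + tx`, `v ↦ v + ty`. -/
def flow : SL2R →ₐ[ℂ] Polynomial SL2R :=
  liftSL2 (Polynomial.C sx) (Polynomial.C sy)
    (Polynomial.C su + Polynomial.X * Polynomial.C sx)
    (Polynomial.C sv + Polynomial.X * Polynomial.C sy) (by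
      have h := congrArg Polynomial.C det_eq
      simp only [map_sub, map_mul, map_one] at h
      linear_combination h)

lemma derivative_flow (D : Derivation ℂ SL2R SL2R)
    (hx : D sx = 0) (hy : D sy = 0) (hu : D su = sx) (hv : D sv = sy) (f : SL2R) :
    Polynomial.derivative (flow f) = flow (D f) := by
  induction f using SL2R_induction with
  | hc r =>
    rw [AlgHom.commutes, Derivation.map_algebraMap, map_zero, Polynomial.algebraMap_apply,
      Polynomial.derivative_C]
  | hadd a b ha hb => simp [ha, hb]
  | hmul a b ha hb =>
    simp only [map_mul, Polynomial.derivative_mul, ha, hb, Derivation.leibniz, smul_eq_mul,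
      map_add]
    ring
  | h0 => simp [hx, flow, liftSL2_x]
  | h1 => simp [hy, flow, liftSL2_y]
  | h2 => simp [hu, flow, liftSL2_u, liftSL2_x]
  | h3 => simp [hv, flow, liftSL2_v, liftSL2_y]

lemma eval_zero_flow (f : SL2R) : (flow f).eval 0 = f := by
  induction f using SL2R_induction with
  | hc r => simp [AlgHom.commutes, Polynomial.algebraMap_apply]
  | hadd a b ha hb => simp [ha, hb]
  | hmul a b ha hb => simp [ha, hb]
  | h0 => simp [flow, liftSL2_x]
  | h1 => simp [flow, liftSL2_y]
  | h2 => simp [flow, liftSL2_u]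
  | h3 => simp [flow, liftSL2_v]

lemma flow_eq_C (D : Derivation ℂ SL2R SL2R)
    (hx : D sx = 0) (hy : D sy = 0) (hu : D su = sx) (hv : D sv = sy) (f : SL2R) (hf : D f = 0) :
    flow f = Polynomial.C f := by
  have h := derivative_flow D hx hy hu hv f
  rw [hf, map_zero] at h
  have : IsAddTorsionFree SL2R := IsAddTorsionFree.of_module_rat SL2R
  have h2 := Polynomial.eq_C_of_derivative_eq_zero h
  have h3 := eval_zero_flow f
  rw [h2, Polynomial.eval_C] at h3
  rw [h2, h3]

/-- Let `z ∈ ℂ[x, y]` and `L = A[1/z]`. If flowing for a time `τ ∈ L` moves `u` and `v` into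
`z⁻¹ ℂ[x, y]`, then `z^N f ∈ ℂ[x, y]` for every `f ∈ ker D` and some `N`: the flow fixes `f`,
which is a polynomial in `x, y, u, v`. -/
lemma exists_pow_mul_eq (D : Derivation ℂ SL2R SL2R)
    (hx : D sx = 0) (hy : D sy = 0) (hu : D su = sx) (hv : D sv = sy) (f : SL2R) (hf : D f = 0)
    (s : MvPolynomial (Fin 2) ℂ) (z : SL2R) (hz : polyMap s = z)
    (L : Type*) [CommRing L] [Algebra SL2R L] [IsLocalization.Away z L] (τ : L)
    (hτu : ∃ p, algebraMap SL2R L z * (algebraMap SL2R L su + τ * algebraMap SL2R L sx)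
      = algebraMap SL2R L (polyMap p))
    (hτv : ∃ p, algebraMap SL2R L z * (algebraMap SL2R L sv + τ * algebraMap SL2R L sy)
      = algebraMap SL2R L (polyMap p)) :
    ∃ N p, z ^ N * f = polyMap p := by
  subst hz
  let ev : SL2R → L := fun g => (flow g).eval₂ (algebraMap SL2R L) τ
  have key : ∀ g, ∃ N p, algebraMap SL2R L (polyMap s) ^ N * ev g
      = algebraMap SL2R L (polyMap p) := by
    intro g
    induction g using SL2R_induction with
    | hc r =>
      refine ⟨0, MvPolynomial.C r, ?_⟩
      simp only [ev, AlgHom.commutes, Polynomial.algebraMap_apply, Polynomial.eval₂_C, pow_zero,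
        one_mul, ← MvPolynomial.algebraMap_eq]
    | hadd a b ha hb =>
      obtain ⟨N, p, hp⟩ := ha
      obtain ⟨M, q, hq⟩ := hb
      refine ⟨N + M, s ^ M * p + s ^ N * q, ?_⟩
      simp only [ev, map_add, Polynomial.eval₂_add, map_mul, map_pow, ← hp, ← hq]
      ring
    | hmul a b ha hb =>
      obtain ⟨N, p, hp⟩ := ha
      obtain ⟨M, q, hq⟩ := hb
      refine ⟨N + M, p * q, ?_⟩
      simp only [ev, map_mul, Polynomial.eval₂_mul, ← hp, ← hq]
      ring
    | h0 => exact ⟨0, X 0, by simp [ev, flow, liftSL2_x, polyMap_X0]⟩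
    | h1 => exact ⟨0, X 1, by simp [ev, flow, liftSL2_y, polyMap_X1]⟩
    | h2 =>
      obtain ⟨p, hp⟩ := hτu
      refine ⟨1, p, ?_⟩
      rw [← hp]
      simp only [ev, flow, liftSL2_u, Polynomial.eval₂_add, Polynomial.eval₂_mul,
        Polynomial.eval₂_C, Polynomial.eval₂_X, pow_one]
    | h3 =>
      obtain ⟨p, hp⟩ := hτv
      refine ⟨1, p, ?_⟩
      rw [← hp]
      simp only [ev, flow, liftSL2_v, Polynomial.eval₂_add, Polynomial.eval₂_mul,
        Polynomial.eval₂_C, Polynomial.eval₂_X, pow_one]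
  obtain ⟨N, p, hp⟩ := key f
  simp only [ev, flow_eq_C D hx hy hu hv f hf, Polynomial.eval₂_C, ← map_pow, ← map_mul] at hp
  obtain ⟨⟨_, M, rfl⟩, hM⟩ :=
    (IsLocalization.eq_iff_exists (Submonoid.powers (polyMap s)) L).1 hp
  refine ⟨M + N, s ^ M * p, ?_⟩
  simp only [map_pow, map_mul] at hM ⊢
  rw [pow_add, mul_assoc]
  exact hM

/-- The kernel of `D` is contained in `ℂ[x, y]`. -/
lemma exists_polyMap_eq (D : Derivation ℂ SL2R SL2R)
    (hx : D sx = 0) (hy : D sy = 0) (hu : D su = sx) (hv : D sv = sy) (f : SL2R) (hf : D f = 0) :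
    ∃ r, polyMap r = f := by
  -- Flowing for time `-u/x` kills `u` and sends `v` to `1/x`.
  have h0 : ∃ N p, sx ^ N * f = polyMap p := by
    set L := Localization.Away sx
    have hi := IsLocalization.Away.mul_invSelf (S := L) sx
    set i := IsLocalization.Away.invSelf (S := L) sx
    have hd := congrArg (algebraMap SL2R L) det_eq
    simp only [map_sub, map_mul, map_one] at hd
    refine exists_pow_mul_eq D hx hy hu hv f hf (X 0) sx polyMap_X0 L
      (-(algebraMap SL2R L su * i)) ⟨0, ?_⟩ ⟨1, ?_⟩
    all_goals
      simp only [map_zero, map_one]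
    · linear_combination (-algebraMap SL2R L su * algebraMap SL2R L sx) * hi
    · linear_combination hd - (algebraMap SL2R L su * algebraMap SL2R L sy) * hi
  -- Flowing for time `-v/y` kills `v` and sends `u` to `-1/y`.
  have h1 : ∃ N p, sy ^ N * f = polyMap p := by
    set L := Localization.Away sy
    have hi := IsLocalization.Away.mul_invSelf (S := L) sy
    set i := IsLocalization.Away.invSelf (S := L) sy
    have hd := congrArg (algebraMap SL2R L) det_eq
    simp only [map_sub, map_mul, map_one] at hd
    refine exists_pow_mul_eq D hx hy hu hv f hf (X 1) sy polyMap_X1 L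
      (-(algebraMap SL2R L sv * i)) ⟨-1, ?_⟩ ⟨0, ?_⟩
    all_goals
      simp only [map_zero, map_one, map_neg]
    · linear_combination -hd - (algebraMap SL2R L sv * algebraMap SL2R L sx) * hi
    · linear_combination (-algebraMap SL2R L sv * algebraMap SL2R L sy) * hi
  obtain ⟨N, p, hp⟩ := h0
  obtain ⟨M, q, hq⟩ := h1
  have hpq : X 1 ^ M * p = X 0 ^ N * q := polyMap_injective (by
    simp only [map_mul, map_pow, ← hp, ← hq, polyMap_X0, polyMap_X1]
    ring)
  have hprime : Prime (X 0 : MvPolynomial (Fin 2) ℂ) := MvPolynomial.X_prime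
  have hnd : ¬ (X 0 : MvPolynomial (Fin 2) ℂ) ∣ X 1 ^ M := fun h => by
    have := hprime.dvd_of_dvd_pow h
    simp [MvPolynomial.X_dvd_X] at this
  obtain ⟨r, rfl⟩ := hprime.pow_dvd_of_dvd_mul_left N hnd ⟨q, hpq⟩
  have hq' : q = X 1 ^ M * r :=
    mul_left_cancel₀ (pow_ne_zero N hprime.ne_zero) (by rw [← hpq]; ring)
  subst hq'
  simp only [map_mul, map_pow, polyMap_X0, polyMap_X1] at hp hq
  -- `x` and `y` generate the unit ideal, hence so do their powers.
  have hcop : IsCoprime (sx ^ N) (sy ^ M) :=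
    IsCoprime.pow ⟨sv, -su, by linear_combination det_eq⟩
  obtain ⟨a, b, hab⟩ := hcop
  exact ⟨r, by linear_combination (f - polyMap r) * hab - a * hp - b * hq⟩

/-- For `n ≥ 1` and any `D`-stable ℂ-subalgebra `C ⊆ A` containing `x` and
`y`, if the ℂ-linear span of the monomials `x^i y^j` with `i + j ≥ n + 2` (the ideal
`⟨x,y⟩^{n+2}` of `ℂ[x,y]`) is contained in `m_1(C) = D(C ∩ ker D²)`, then `B_n ⊆ C`. -/
theorem stmt12 (n : ℕ) (hn : 1 ≤ n) (D : Derivation ℂ SL2R SL2R)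
    (hx : D sx = 0) (hy : D sy = 0) (hu : D su = sx) (hv : D sv = sy)
    (C : Subalgebra ℂ SL2R) (hC : ∀ c ∈ C, D c ∈ C) (hxC : sx ∈ C) (hyC : sy ∈ C)
    (hcontain : ↑(Submodule.span ℂ {a : SL2R | ∃ i j : ℕ,
        n + 2 ≤ i + j ∧ a = sx ^ i * sy ^ j}) ⊆
      {s : SL2R | ∃ c ∈ C, D (D c) = 0 ∧ D c = s}) :
    Bn n ≤ C := by
  have hpoly : ∀ r, polyMap r ∈ C := by
    intro r
    induction r using MvPolynomial.induction_on with
    | C r => rw [← MvPolynomial.algebraMap_eq, AlgHom.commutes]; exact C.algebraMap_mem r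
    | add p q hp hq => rw [map_add]; exact C.add_mem hp hq
    | mul_X p i hp =>
      rw [map_mul]
      refine C.mul_mem hp ?_
      fin_cases i
      · exact polyMap_X0 ▸ hxC
      · exact polyMap_X1 ▸ hyC
  have hmem : ∀ (w : SL2R) (i j : ℕ), n + 2 ≤ i + j → D w = sx ^ i * sy ^ j → w ∈ C := by
    intro w i j hij hw
    obtain ⟨c, hc, -, hcw⟩ := hcontain (Submodule.subset_span ⟨i, j, hij, rfl⟩)
    obtain ⟨r, hr⟩ := exists_polyMap_eq D hx hy hu hv (w - c) (by rw [map_sub, hw, hcw, sub_self])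
    have : w = polyMap r + c := by rw [hr]; ring
    rw [this]
    exact C.add_mem (hpoly r) hc
  refine Algebra.adjoin_le ?_
  rintro w ((rfl | rfl | rfl) | ⟨i, hi, rfl⟩)
  · exact hxC
  · exact hyC
  · refine hmem _ (n + 2) 0 (by omega) ?_
    simp only [Derivation.leibniz, Derivation.leibniz_pow, hx, hu, smul_eq_mul]
    ring
  · refine hmem _ i (n + 1 - i + 1) (by omega) ?_
    simp only [Derivation.leibniz, Derivation.leibniz_pow, hx, hy, hv, smul_eq_mul]
    ring

end
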